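/- arXiv:2507.22282 — 5 statements merged into one kernel-verified Lean document; each statement's English description precedes it below -/
import Mathlib

section
/- Let R_1, …, R_{n+1} be independent and identically distributed real-valued random variables on a probability space (Ω, P). For every k ∈ {1, …, n+1}, the probability that R_{n+1} is less than or equal to the k-th smallest value among the full sample R_1, …, R_{n+1} is at least k/(n+1). -/
open MeasureTheory ProbabilityTheory

/-- The `k`-th smallest value (k-th order statistic, 1-indexed) of a finite tuple of reals:
the `k`-th entry of the tuple sorted in non-decreasing order. -/
noncomputable def kthSmallest {m : ℕ} (r : Fin m → ℝ) (k : ℕ) : ℝ :=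
  ((List.ofFn r).mergeSort (· ≤ ·)).getD (k - 1) 0

theorem kth_eq {m : ℕ} (r : Fin m → ℝ) (k : ℕ) (hk : k - 1 < m) :
    kthSmallest r k = (r ∘ Tuple.sort r) ⟨k - 1, hk⟩ := by
  have h : (List.ofFn r).mergeSort (· ≤ ·) = List.ofFn (r ∘ Tuple.sort r) := by
    refine List.Perm.eq_of_pairwise (le := (· ≤ ·)) (fun a b _ _ h1 h2 => le_antisymm h1 h2) ?_ ?_ ?_
    · exact List.pairwise_mergeSort' (· ≤ ·) _
    · rw [List.pairwise_ofFn]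
      intro i j hij
      exact Tuple.monotone_sort r hij.le
    · exact (List.mergeSort_perm _ _).trans (Equiv.Perm.ofFn_comp_perm (Tuple.sort r) r).symm
  unfold kthSmallest
  rw [h, List.getD_eq_getElem _ _ (by simpa using hk)]
  simp

theorem card_perm {m : ℕ} (p : Fin m → Prop) [DecidablePred p] (σ : Equiv.Perm (Fin m)) :
    (Finset.univ.filter (fun i => p (σ i))).card = (Finset.univ.filter p).card := by
  refine Finset.card_bij (fun i _ => σ i) (by simp) (by simp) ?_
  intro b hb
  exact ⟨σ.symm b, by simpa using hb, by simp⟩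

theorem le_kth_iff {m : ℕ} (r : Fin m → ℝ) (k : ℕ) (hk : k - 1 < m) (a : ℝ) :
    a ≤ kthSmallest r k ↔ (Finset.univ.filter (fun i => r i < a)).card ≤ k - 1 := by
  have h := Tuple.lt_card_lt_iff_apply_lt_of_monotone (j := ⟨k - 1, hk⟩) (a := a)
    (Tuple.monotone_sort r)
  rw [kth_eq r k hk, ← not_lt, ← h, not_lt, ← card_perm (fun i => r i < a) (Tuple.sort r)]
  rfl

theorem k_le_card {m : ℕ} (r : Fin m → ℝ) (k : ℕ) (hk : k - 1 < m) :
    k ≤ (Finset.univ.filter (fun j => r j ≤ kthSmallest r k)).card := by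
  have h := (Tuple.lt_card_le_iff_apply_le_of_monotone (j := ⟨k - 1, hk⟩)
    (a := kthSmallest r k) (Tuple.monotone_sort r)).2 (kth_eq r k hk).ge
  rw [← card_perm (fun i => r i ≤ kthSmallest r k) (Tuple.sort r)]
  have h' : k - 1 < (Finset.univ.filter
    (fun j => r (Tuple.sort r j) ≤ kthSmallest r k)).card := h
  omega

theorem meas_A {m : ℕ} (k : ℕ) (hk : k - 1 < m) (j : Fin m) :
    MeasurableSet {r : Fin m → ℝ | r j ≤ kthSmallest r k} := by
  simp_rw [le_kth_iff _ k hk, Finset.card_filter]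
  refine measurableSet_le (Finset.measurable_sum _ fun i _ => ?_) measurable_const
  exact Measurable.ite (measurableSet_lt (measurable_pi_apply i) (measurable_pi_apply j))
    measurable_const measurable_const

theorem kth_perm {m : ℕ} (r : Fin m → ℝ) (k : ℕ) (hk : k - 1 < m) (σ : Equiv.Perm (Fin m)) :
    kthSmallest (fun i => r (σ i)) k = kthSmallest r k := by
  rw [kth_eq _ k hk, kth_eq _ k hk]
  exact congrFun (Tuple.comp_perm_comp_sort_eq_comp_sort (f := r) (σ := σ)) _

/-- Rank lemma underlying conformal prediction: for i.i.d. real random variables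
`R 0, …, R n` (a sample of size `n+1`), for every `k ∈ {1, …, n+1}` the probability that
the last one, `R (Fin.last n)`, is at most the `k`-th smallest value of the full sample is
at least `k / (n+1)`. -/
theorem rank_lemma {Ω : Type*} [MeasurableSpace Ω] (P : Measure Ω) [IsProbabilityMeasure P]
    (n : ℕ) (R : Fin (n + 1) → Ω → ℝ)
    (hmeas : ∀ i, Measurable (R i))
    (hindep : iIndepFun R P)
    (hident : ∀ i j, IdentDistrib (R i) (R j) P P)
    (k : ℕ) (hk1 : 1 ≤ k) (hk2 : k ≤ n + 1) :
    P {ω | R (Fin.last n) ω ≤ kthSmallest (fun i => R i ω) k} ≥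
      ENNReal.ofReal ((k : ℝ) / ((n : ℝ) + 1)) := by
  have hk : k - 1 < n + 1 := by omega
  set A : Fin (n + 1) → Set (Fin (n + 1) → ℝ) := fun j => {r | r j ≤ kthSmallest r k} with hA
  have hAm : ∀ j, MeasurableSet (A j) := fun j => meas_A k hk j
  have hRm : Measurable (fun ω i => R i ω) := measurable_pi_lambda _ hmeas
  set ν := P.map (R (Fin.last n)) with hν
  have : IsProbabilityMeasure ν := Measure.isProbabilityMeasure_map (hmeas _).aemeasurable
  have hmap : P.map (fun ω i => R i ω) = Measure.pi (fun _ => ν) := by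
    rw [(iIndepFun_iff_map_fun_eq_pi_map fun i => (hmeas i).aemeasurable).1 hindep]
    congr 1
    funext i
    exact (hident i (Fin.last n)).map_eq
  set μ : Measure (Fin (n + 1) → ℝ) := Measure.pi (fun _ => ν) with hμ
  have hinv : ∀ j, μ (A j) = μ (A (Fin.last n)) := by
    intro j
    have hp := measurePreserving_piCongrLeft (fun _ : Fin (n + 1) => ν)
      (Equiv.swap j (Fin.last n))
    rw [← hp.measure_preimage (hAm (Fin.last n)).nullMeasurableSet]
    congr 1
    ext r
    have e : (MeasurableEquiv.piCongrLeft (fun _ : Fin (n + 1) => ℝ)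
        (Equiv.swap j (Fin.last n))) r = fun i => r (Equiv.swap j (Fin.last n) i) := by
      funext i
      have := Equiv.piCongrLeft_apply_apply (fun _ : Fin (n + 1) => ℝ)
        (Equiv.swap j (Fin.last n)) r (Equiv.swap j (Fin.last n) i)
      rw [Equiv.swap_apply_self] at this
      exact this
    simp only [hA, Set.mem_preimage, Set.mem_ofPred_eq, e, kth_perm r k hk]
    simp
  have hsum : (k : ENNReal) ≤ ∑ j, μ (A j) := by
    calc (k : ENNReal) = ∫⁻ _, (k : ENNReal) ∂μ := by simp
      _ ≤ ∫⁻ r, ∑ j, (A j).indicator (fun _ => (1 : ENNReal)) r ∂μ := by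
        refine lintegral_mono fun r => ?_
        have := k_le_card r k hk
        rw [Finset.card_filter] at this
        have h2 : (k : ENNReal) ≤ ((∑ j, if r j ≤ kthSmallest r k then 1 else 0 : ℕ) : ENNReal) :=
          by exact_mod_cast this
        simpa [hA, Set.indicator_apply] using h2
      _ = ∑ j, μ (A j) := by
        rw [lintegral_finsetSum _ fun j _ => measurable_const.indicator (hAm j)]
        simp [lintegral_indicator, hAm]
  have hP : P {ω | R (Fin.last n) ω ≤ kthSmallest (fun i => R i ω) k} = μ (A (Fin.last n)) := by
    rw [← hmap, Measure.map_apply hRm (hAm _)]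
    rfl
  simp_rw [hinv] at hsum
  rw [hP, ge_iff_le, ENNReal.ofReal_div_of_pos (by positivity)]
  refine ENNReal.div_le_of_le_mul ?_
  have h3 : ENNReal.ofReal ((n : ℝ) + 1) = ((n + 1 : ℕ) : ENNReal) := by
    rw [← ENNReal.ofReal_natCast]; simp
  rw [h3, ENNReal.ofReal_natCast, mul_comm]
  simpa using hsum
end

section
/- Let R_1, …, R_n, R_{n+1} be independent and identically distributed real-valued random variables on a probability space (Ω, P), let δ ∈ (0,1), and set p := ⌈(n+1)(1−δ)⌉. Define the conformal quantile Q (with values in the extended reals) by Q := the p-th smallest value among R_1, …, R_n if p ≤ n, and Q := +∞ if p = n+1. Then P(R_{n+1} ≤ Q) ≥ 1 − δ. -/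
open MeasureTheory ProbabilityTheory

theorem sc_comb {m : ℕ} (x : Fin m → ℝ) (p : ℕ) (hp : p ≤ m) :
    p ≤ (Finset.univ.filter (fun i => (Finset.univ.filter (fun j => x j < x i)).card < p)).card := by
  classical
  have h1 : ((Finset.univ : Finset (Fin p)).map
      ((Fin.castLEEmb hp).trans (Tuple.sort x).toEmbedding)).card = p := by simp
  conv_lhs => rw [← h1]
  apply Finset.card_le_card
  intro i hi
  simp only [Finset.mem_map, Finset.mem_univ, true_and] at hi
  obtain ⟨k, rfl⟩ := hi
  simp only [Finset.mem_filter, Finset.mem_univ, true_and]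
  have h2 : (Finset.univ.filter (fun j => x j < x (((Fin.castLEEmb hp).trans (Tuple.sort x).toEmbedding) k)))
      ⊆ (Finset.Iio (Fin.castLE hp k)).map (Tuple.sort x).toEmbedding := by
    intro j hj
    simp only [Finset.mem_filter, Finset.mem_univ, true_and] at hj
    simp only [Finset.mem_map, Finset.mem_Iio]
    refine ⟨(Tuple.sort x).symm j, ?_, by simp⟩
    by_contra hc
    have := Tuple.monotone_sort x (not_lt.mp hc)
    simp at this
    exact absurd hj (not_lt.mpr this)
  have h3 := Finset.card_le_card h2
  simp at h3
  have := k.2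
  simp
  omega

theorem sc_kth {n : ℕ} (x : Fin (n + 1) → ℝ) (p : ℕ) (hp0 : 1 ≤ p) (hp : p ≤ n)
    (h : (Finset.univ.filter (fun j => x j < x (Fin.last n))).card < p) :
    x (Fin.last n) ≤ kthSmallest (fun i : Fin n => x i.castSucc) p := by
  by_contra hc
  rw [not_le] at hc
  unfold kthSmallest at hc
  set l := List.ofFn (fun i : Fin n => x i.castSucc) with hl
  have hperm : (l.mergeSort (· ≤ ·)).Perm l := List.mergeSort_perm _ _
  set s := l.mergeSort (· ≤ ·) with hs
  have hsort : s.Pairwise (· ≤ ·) := by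
    have := List.pairwise_mergeSort (le := fun a b : ℝ => decide (a ≤ b))
      (by intro a b c; simp; exact le_trans) (by intro a b; simp; exact le_total a b) l
    simpa using this
  have hlen : s.length = n := by rw [hperm.length_eq, hl]; simp
  have hlt : p - 1 < s.length := by omega
  rw [List.getD_eq_getElem _ _ hlt] at hc
  have hcount : p ≤ s.countP (fun a => decide (a < x (Fin.last n))) := by
    have h1 : (s.take p).countP (fun a => decide (a < x (Fin.last n))) = (s.take p).length := by
      rw [List.countP_eq_length]
      intro a ha
      obtain ⟨i, hi, rfl⟩ := List.mem_iff_getElem.mp ha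
      simp only [List.length_take] at hi
      rw [List.getElem_take]
      simp only [decide_eq_true_eq]
      refine lt_of_le_of_lt ?_ hc
      rcases Nat.lt_or_ge i (p-1) with h' | h'
      · exact List.pairwise_iff_getElem.mp hsort i (p-1) (by omega) hlt h'
      · have : i = p - 1 := by omega
        subst this; exact le_rfl
    have h2 := (List.take_sublist p s).countP_le (p := fun a => decide (a < x (Fin.last n)))
    rw [h1, List.length_take] at h2
    omega
  rw [hperm.countP_eq, hl] at hcount
  have : (List.ofFn (fun i : Fin n => x i.castSucc)).countP (fun a => decide (a < x (Fin.last n)))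
      = (Finset.univ.filter (fun j : Fin n => x j.castSucc < x (Fin.last n))).card := by
    rw [← Multiset.coe_countP, Finset.card_def, Finset.filter_val, ← Multiset.countP_eq_card_filter]
    rw [show ((List.ofFn (fun i : Fin n => x i.castSucc) : List ℝ) : Multiset ℝ) = (Finset.univ : Finset (Fin n)).val.map (fun i => x i.castSucc) from ?_]
    · rw [Multiset.countP_map, Multiset.countP_eq_card_filter]
    · rw [Fin.univ_def, List.ofFn_eq_map]; rfl
  rw [this] at hcount
  have h4 : (Finset.univ.filter (fun j : Fin n => x j.castSucc < x (Fin.last n))).card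
      ≤ (Finset.univ.filter (fun j => x j < x (Fin.last n))).card := by
    rw [← Finset.card_map Fin.castSuccEmb]
    apply Finset.card_le_card
    intro j hj
    simp only [Finset.mem_map, Finset.mem_filter, Finset.mem_univ, true_and] at hj ⊢
    obtain ⟨a, ha, rfl⟩ := hj
    exact ha
  omega

theorem sc_meas {m : ℕ} (p : ℕ) (i : Fin m) :
    MeasurableSet {x : Fin m → ℝ | (Finset.univ.filter (fun j => x j < x i)).card < p} := by
  simp only [Finset.card_filter]
  refine measurableSet_lt (Finset.measurable_sum _ fun j _ => ?_) measurable_const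
  exact Measurable.ite (measurableSet_lt (measurable_pi_apply j) (measurable_pi_apply i))
    measurable_const measurable_const

/-- Split conformal prediction guarantee: for i.i.d. real random variables
`R 0, …, R (n-1), R n` (calibration scores `R i.castSucc` for `i : Fin n` and a test score
`R (Fin.last n)`), `δ ∈ (0,1)` and `p := ⌈(n+1)(1-δ)⌉`, the conformal quantile `Q` (valued
in the extended reals) defined as the `p`-th smallest calibration score if `p ≤ n` and `+∞`
if `p = n+1` satisfies `P(R_{n+1} ≤ Q) ≥ 1 - δ`. -/
theorem split_conformal {Ω : Type*} [MeasurableSpace Ω] (P : Measure Ω) [IsProbabilityMeasure P]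
    (n : ℕ) (R : Fin (n + 1) → Ω → ℝ)
    (hmeas : ∀ i, Measurable (R i))
    (hindep : iIndepFun R P)
    (hident : ∀ i j, IdentDistrib (R i) (R j) P P)
    (δ : ℝ) (hδ : δ ∈ Set.Ioo (0 : ℝ) 1)
    (p : ℕ) (hp : p = ⌈((n : ℝ) + 1) * (1 - δ)⌉₊)
    (Q : Ω → EReal)
    (hQ : ∀ ω, Q ω = if p ≤ n
      then ((kthSmallest (fun i : Fin n => R i.castSucc ω) p : ℝ) : EReal)
      else (⊤ : EReal)) :
    P {ω | ((R (Fin.last n) ω : ℝ) : EReal) ≤ Q ω} ≥ ENNReal.ofReal (1 - δ) := by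
  classical
  obtain ⟨hδ0, hδ1⟩ := hδ
  have hpos : 0 < ((n : ℝ) + 1) * (1 - δ) := by
    have : 0 < 1 - δ := by linarith
    positivity
  have hp0 : 1 ≤ p := by rw [hp]; exact Nat.ceil_pos.mpr hpos
  have hpn : p ≤ n + 1 := by
    rw [hp, Nat.ceil_le]; push_cast; nlinarith [(Nat.cast_nonneg n : (0:ℝ) ≤ n)]
  have hple : ((n : ℝ) + 1) * (1 - δ) ≤ p := by rw [hp]; exact Nat.le_ceil _
  let S : Fin (n+1) → Set (Fin (n+1) → ℝ) := fun i =>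
    {x | (Finset.univ.filter (fun j => x j < x i)).card < p}
  have hS : ∀ i, MeasurableSet (S i) := fun i => sc_meas p i
  let X : Ω → Fin (n+1) → ℝ := fun ω i => R i ω
  have hX : Measurable X := measurable_pi_lambda _ hmeas
  have hsub : X ⁻¹' (S (Fin.last n)) ⊆ {ω | ((R (Fin.last n) ω : ℝ) : EReal) ≤ Q ω} := by
    intro ω hω
    simp only [Set.mem_setOf_eq]
    rw [hQ]
    split_ifs with h
    · exact EReal.coe_le_coe_iff.mpr (sc_kth (X ω) p hp0 h hω)
    · exact le_top
  have hexch : ∀ i, P (X ⁻¹' (S i)) = P (X ⁻¹' (S (Fin.last n))) := by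
    intro i
    let σ : Equiv.Perm (Fin (n+1)) := Equiv.swap i (Fin.last n)
    let Y : Ω → Fin (n+1) → ℝ := fun ω j => R (σ j) ω
    have hY : Measurable Y := measurable_pi_lambda _ fun j => hmeas _
    have e1 := (iIndepFun_iff_map_fun_eq_pi_map (fun j => (hmeas j).aemeasurable)).mp hindep
    have e2 := (iIndepFun_iff_map_fun_eq_pi_map (fun j => (hmeas (σ j)).aemeasurable)).mp
      (hindep.precomp σ.injective)
    have e3 : P.map X = P.map Y := by
      refine e1.trans (Eq.trans ?_ e2.symm)
      congr 1
      funext j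
      exact (hident j (σ j)).map_eq
    have e4 : X ⁻¹' (S i) = Y ⁻¹' (S (Fin.last n)) := by
      ext ω
      simp only [S, X, Y, Set.mem_preimage, Set.mem_setOf_eq]
      have : σ (Fin.last n) = i := Equiv.swap_apply_right _ _
      rw [this]
      rw [← Finset.card_map σ.toEmbedding (s := Finset.univ.filter (fun j => R (σ j) ω < R i ω))]
      have : (Finset.univ.filter (fun j => R j ω < R i ω)) =
          (Finset.univ.filter (fun j => R (σ j) ω < R i ω)).map σ.toEmbedding := by
        ext j
        simp only [Finset.mem_map, Finset.mem_filter, Finset.mem_univ, true_and]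
        constructor
        · intro h; exact ⟨σ.symm j, by simpa using h, by simp⟩
        · rintro ⟨a, ha, rfl⟩; exact ha
      rw [this]
    rw [e4, ← Measure.map_apply hY (hS _), ← e3, Measure.map_apply hX (hS _)]
  have hsum : (p : ENNReal) ≤ ∑ i, P (X ⁻¹' (S i)) := by
    have h1 : ∑ i, P (X ⁻¹' (S i)) = ∫⁻ ω, ∑ i, (X ⁻¹' (S i)).indicator 1 ω ∂P := by
      rw [lintegral_finsetSum]
      · refine Finset.sum_congr rfl fun i _ => ?_
        rw [lintegral_indicator_one (hX (hS i))]
      · intro i _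
        exact measurable_one.indicator (hX (hS i))
    rw [h1]
    calc (p : ENNReal) = ∫⁻ ω, (p : ENNReal) ∂P := by simp
      _ ≤ _ := by
        apply lintegral_mono
        intro ω
        have := sc_comb (X ω) p hpn
        rw [Finset.card_filter] at this
        have h2 : ((p : ℕ) : ENNReal) ≤ _ := Nat.cast_le.mpr this
        refine h2.trans (le_of_eq ?_)
        push_cast
        refine Finset.sum_congr rfl fun i _ => ?_
        simp only [Set.indicator_apply, S, Set.mem_preimage, Set.mem_setOf_eq, Pi.one_apply]
  simp only [hexch, Finset.sum_const, Finset.card_univ, Fintype.card_fin, nsmul_eq_mul] at hsum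
  refine ge_iff_le.mpr (le_trans ?_ (measure_mono hsub))
  rw [ENNReal.ofReal_le_iff_le_toReal (measure_ne_top _ _)]
  have h5 := ENNReal.toReal_mono (ENNReal.mul_ne_top (by simp) (measure_ne_top _ _)) hsum
  rw [ENNReal.toReal_mul, ENNReal.toReal_natCast, ENNReal.toReal_natCast] at h5
  push_cast at h5
  exact le_of_mul_le_mul_left (hple.trans h5) (by positivity)
end

section
/- Let r_1, …, r_n, r_{n+1} be real numbers and let k ∈ {1, …, n}. Then r_{n+1} is less than or equal to the k-th smallest value among r_1, …, r_n if and only if r_{n+1} is less than or equal to the k-th smallest value among the full collection r_1, …, r_n, r_{n+1}. -/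
theorem le_getD_iff_countP (x : ℝ) : ∀ (l : List ℝ), l.Pairwise (· ≤ ·) → ∀ i, i < l.length →
    (x ≤ l.getD i 0 ↔ l.countP (fun y => decide (y < x)) ≤ i) := by
  intro l
  induction l with
  | nil => intro _ i hi; simp at hi
  | cons a t ih =>
    intro hl i hi
    rw [List.pairwise_cons] at hl
    obtain ⟨ha, ht⟩ := hl
    have h0 : x ≤ a → t.countP (fun y => decide (y < x)) = 0 := by
      intro hx
      rw [List.countP_eq_zero]
      intro b hb
      simpa using hx.trans (ha b hb)
    rw [List.countP_cons]
    cases i with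
    | zero =>
      by_cases hx : x ≤ a
      · simp [h0 hx, hx]
      · simp [hx, not_le.mp hx]
    | succ i =>
      have := ih ht i (by simpa using hi)
      rw [List.getD_cons_succ, this]
      by_cases hx : x ≤ a
      · simp [h0 hx]
        split_ifs <;> omega
      · simp [not_le.mp hx]

theorem le_kthSmallest_iff {m : ℕ} (r : Fin m → ℝ) (k : ℕ) (hk1 : 1 ≤ k) (hk2 : k ≤ m) (x : ℝ) :
    x ≤ kthSmallest r k ↔ (List.ofFn r).countP (fun y => decide (y < x)) ≤ k - 1 := by
  unfold kthSmallest
  rw [le_getD_iff_countP, (List.mergeSort_perm _ _).countP_eq]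
  · exact List.pairwise_mergeSort' _ _
  · simp; omega

/-- Deterministic order-statistics identity: for real numbers `r 0, …, r (n-1), r n`
(i.e. `r : Fin (n+1) → ℝ`, with `r i.castSucc` the first `n` values and `r (Fin.last n)`
the last one) and `k ∈ {1, …, n}`, the last value is at most the `k`-th smallest of the
first `n` values if and only if it is at most the `k`-th smallest of the full collection
of `n+1` values. -/
theorem kthSmallest_insert_iff (n : ℕ) (r : Fin (n + 1) → ℝ)
    (k : ℕ) (hk1 : 1 ≤ k) (hk2 : k ≤ n) :
    r (Fin.last n) ≤ kthSmallest (fun i : Fin n => r i.castSucc) k ↔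
      r (Fin.last n) ≤ kthSmallest r k := by
  rw [le_kthSmallest_iff _ k hk1 hk2, le_kthSmallest_iff _ k hk1 (by omega), List.ofFn_succ' r]
  simp [List.concat_eq_append, List.countP_append]
end

section
/- Let H ≥ 1 and let X^{(1)}, …, X^{(n)}, X^{(n+1)} be independent and identically distributed random vectors with values in ℝ^H on a probability space (Ω, P). Let α_1, …, α_H be strictly positive real constants, let δ ∈ (0,1), and set p := ⌈(n+1)(1−δ)⌉; assume p ≤ n. For each i define the score S^{(i)} := max_{1≤h≤H} α_h X^{(i)}_h, and let Q be the p-th smallest value among S^{(1)}, …, S^{(n)}. Then P( for all h ∈ {1,…,H}: X^{(n+1)}_h ≤ Q/α_h ) ≥ 1 − δ. -/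
open MeasureTheory ProbabilityTheory

lemma kth_aux {m : ℕ} (r : Fin m → ℝ) (k : ℕ) (hk : 1 ≤ k) (hkm : k ≤ m) :
    kthSmallest r k = r (Tuple.sort r ⟨k - 1, by omega⟩) := by
  have hs : (List.ofFn r).mergeSort (· ≤ ·) = List.ofFn (r ∘ Tuple.sort r) := by
    apply List.Perm.eq_of_pairwise' (r := (· ≤ ·))
    · have := List.pairwise_mergeSort (le := fun a b : ℝ => decide (a ≤ b))
        (fun a b c => by simpa using le_trans) (fun a b => by simpa using le_total a b)
        (List.ofFn r)
      simpa using this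
    · exact (Tuple.monotone_sort r).sortedLE_ofFn.pairwise
    · exact (List.mergeSort_perm _ _).trans (Equiv.Perm.ofFn_comp_perm _ _).symm
  unfold kthSmallest
  rw [hs, List.getD_eq_getElem _ _ (by simp; omega)]
  simp

lemma kth_card {m : ℕ} (r : Fin m → ℝ) (k : ℕ) (hk : 1 ≤ k) (hkm : k ≤ m) :
    k ≤ (Finset.univ.filter (fun i => r i ≤ kthSmallest r k)).card := by
  rw [kth_aux r k hk hkm]
  have : ((Finset.univ : Finset (Fin k)).map
      ((Fin.castLEEmb hkm).trans (Tuple.sort r).toEmbedding)) ⊆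
      (Finset.univ.filter (fun i => r i ≤ r (Tuple.sort r ⟨k - 1, by omega⟩))) := by
    intro i hi
    simp only [Finset.mem_map, Finset.mem_univ, true_and] at hi
    obtain ⟨a, rfl⟩ := hi
    simp only [Finset.mem_filter, Finset.mem_univ, true_and]
    apply Tuple.monotone_sort r
    have := a.2
    rw [Fin.le_def]
    simp
    omega
  simpa using Finset.card_le_card this

lemma rank_card {m : ℕ} (s : Fin m → ℝ) (p : ℕ) (hp : p ≤ m) :
    p ≤ (Finset.univ.filter
      (fun j => (Finset.univ.filter (fun i => s i < s j)).card < p)).card := by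
  have : ((Finset.univ : Finset (Fin p)).map
      ((Fin.castLEEmb hp).trans (Tuple.sort s).toEmbedding)) ⊆
      (Finset.univ.filter
      (fun j => (Finset.univ.filter (fun i => s i < s j)).card < p)) := by
    intro j hj
    simp only [Finset.mem_map, Finset.mem_univ, true_and] at hj
    obtain ⟨a, rfl⟩ := hj
    simp only [Finset.mem_filter, Finset.mem_univ, true_and]
    refine lt_of_le_of_lt ?_ a.2
    have h2 : (Finset.univ.filter (fun i => s i < s (Tuple.sort s (Fin.castLE hp a)))) ⊆
        (Finset.Iio (Fin.castLE hp a)).map (Tuple.sort s).toEmbedding := by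
      intro i hi
      simp only [Finset.mem_filter, Finset.mem_univ, true_and] at hi
      simp only [Finset.mem_map, Finset.mem_Iio]
      refine ⟨(Tuple.sort s).symm i, ?_, by simp⟩
      by_contra hc
      have := Tuple.monotone_sort s (not_lt.mp hc)
      simp at this
      linarith
    simpa using Finset.card_le_card h2
  simpa using Finset.card_le_card this

def rankSet (m p : ℕ) (j : Fin m) : Set (Fin m → ℝ) :=
  {s | (Finset.univ.filter (fun i => s i < s j)).card < p}

lemma rankSet_meas (m p : ℕ) (j : Fin m) : MeasurableSet (rankSet m p j) := by
  have : Measurable (fun s : Fin m → ℝ => ∑ i, if s i < s j then 1 else 0) := by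
    refine Finset.measurable_sum _ fun i _ => ?_
    exact Measurable.ite (measurableSet_lt (measurable_pi_apply i) (measurable_pi_apply j))
      measurable_const measurable_const
  have h2 := this (measurableSet_Iio (a := p))
  convert h2 using 1
  ext s
  simp [rankSet]

lemma rank_perm {m : ℕ} (p : ℕ) (s : Fin m → ℝ) (σ : Equiv.Perm (Fin m)) (j : Fin m) :
    (fun i => s (σ i)) ∈ rankSet m p j ↔ s ∈ rankSet m p (σ j) := by
  have : (Finset.univ.filter (fun i => s i < s (σ j))) =
      (Finset.univ.filter (fun i => s (σ i) < s (σ j))).map σ.toEmbedding := by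
    ext i
    simp only [Finset.mem_filter, Finset.mem_univ, true_and, Finset.mem_map]
    constructor
    · intro h
      exact ⟨σ.symm i, by simpa using h, by simp⟩
    · rintro ⟨a, h, rfl⟩
      exact h
  simp only [rankSet, Set.mem_ofPred_eq]
  rw [this, Finset.card_map]

lemma rank_prob {Ω : Type*} [MeasurableSpace Ω] (P : Measure Ω)
    [IsProbabilityMeasure P] (n p : ℕ) (hp : p ≤ n + 1)
    (S : Fin (n + 1) → Ω → ℝ) (hm : ∀ i, Measurable (S i)) (hind : iIndepFun S P)
    (hid : ∀ i j, P.map (S i) = P.map (S j)) (l : Fin (n + 1)) :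
    (p : ENNReal) ≤ (n + 1) * P {ω | (fun i => S i ω) ∈ rankSet (n + 1) p l} := by
  have hT : ∀ σ : Equiv.Perm (Fin (n + 1)), Measurable (fun ω i => S (σ i) ω) := fun σ =>
    measurable_pi_lambda _ fun i => hm _
  have hmap : ∀ σ : Equiv.Perm (Fin (n + 1)),
      P.map (fun ω i => S (σ i) ω) = Measure.pi (fun _ => P.map (S l)) := by
    intro σ
    have h1 : iIndepFun (fun i => S (σ i)) P := hind.precomp σ.injective
    rw [(iIndepFun_iff_map_fun_eq_pi_map (fun i => (hm (σ i)).aemeasurable)).1 h1]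
    congr 1
    ext1 i
    exact hid _ _
  have heq : ∀ j, P {ω | (fun i => S i ω) ∈ rankSet (n + 1) p j} =
      P {ω | (fun i => S i ω) ∈ rankSet (n + 1) p l} := by
    intro j
    have h1 := hmap (Equiv.swap l j)
    have h2 := hmap (Equiv.refl _)
    have h3 := congrArg (fun μ => μ (rankSet (n + 1) p l)) (h1.trans h2.symm)
    simp only [Measure.map_apply (hT _) (rankSet_meas _ _ _)] at h3
    convert h3 using 2
    · ext ω
      have := rank_perm p (fun i => S i ω) (Equiv.swap l j) l
      rw [Equiv.swap_apply_left] at this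
      exact this.symm
    · rfl
  have hE : ∀ j, MeasurableSet {ω | (fun i => S i ω) ∈ rankSet (n + 1) p j} := fun j =>
    (measurable_pi_lambda _ hm) (rankSet_meas _ _ j)
  calc (p : ENNReal) = ∫⁻ _, (p : ENNReal) ∂P := by simp
    _ ≤ ∫⁻ ω, ∑ j, Set.indicator {ω | (fun i => S i ω) ∈ rankSet (n + 1) p j} 1 ω ∂P := by
        apply lintegral_mono
        intro ω
        have := rank_card (fun i => S i ω) p hp
        simp only [Set.indicator_apply, Set.mem_ofPred_eq, rankSet, Pi.one_apply,
          Finset.sum_boole]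
        exact_mod_cast this
    _ = ∑ j, P {ω | (fun i => S i ω) ∈ rankSet (n + 1) p j} := by
        rw [lintegral_finsetSum _ (fun j _ => measurable_one.indicator (hE j))]
        simp only [lintegral_indicator_one (hE _)]
    _ = _ := by
        simp [heq]

/-- Conformal guarantee for max-normalized scores over a horizon of `H+1 ≥ 1` steps:
for i.i.d. random vectors `X 0, …, X n` in `ℝ^{H+1}`, strictly positive constants `α`,
`δ ∈ (0,1)` and `p := ⌈(n+1)(1-δ)⌉ ≤ n`, letting `S i := max_h α h * X i h` and `Q` be the
`p`-th smallest value among the first `n` scores, the test vector `X (Fin.last n)` satisfies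
`X_h ≤ Q / α h` for all `h` simultaneously with probability at least `1 - δ`. -/
theorem conformal_max_normalized {Ω : Type*} [MeasurableSpace Ω] (P : Measure Ω)
    [IsProbabilityMeasure P]
    (H n : ℕ) (X : Fin (n + 1) → Ω → (Fin (H + 1) → ℝ))
    (hmeas : ∀ i, Measurable (X i))
    (hindep : iIndepFun X P)
    (hident : ∀ i j, IdentDistrib (X i) (X j) P P)
    (α : Fin (H + 1) → ℝ) (hα : ∀ h, 0 < α h)
    (δ : ℝ) (hδ : δ ∈ Set.Ioo (0 : ℝ) 1)
    (p : ℕ) (hp : p = ⌈((n : ℝ) + 1) * (1 - δ)⌉₊) (hpn : p ≤ n)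
    (S : Fin (n + 1) → Ω → ℝ)
    (hS : ∀ i ω, S i ω = Finset.univ.sup' Finset.univ_nonempty (fun h => α h * X i ω h))
    (Q : Ω → ℝ)
    (hQ : ∀ ω, Q ω = kthSmallest (fun i : Fin n => S i.castSucc ω) p) :
    P {ω | ∀ h, X (Fin.last n) ω h ≤ Q ω / α h} ≥ ENNReal.ofReal (1 - δ) := by
  obtain ⟨hδ0, hδ1⟩ := hδ
  have hpos : 0 < ((n : ℝ) + 1) * (1 - δ) := mul_pos (by positivity) (by linarith)
  have hp1 : 1 ≤ p := by
    rw [hp]; exact Nat.ceil_pos.2 hpos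
  have hpc : ((n : ℝ) + 1) * (1 - δ) ≤ p := by
    rw [hp]; exact Nat.le_ceil _
  let g : (Fin (H + 1) → ℝ) → ℝ :=
    fun x => Finset.univ.sup' Finset.univ_nonempty (fun h => α h * x h)
  have hg : Measurable g := by
    have : Continuous g := by
      apply Continuous.finset_sup'_apply
      intro i _
      fun_prop
    exact this.measurable
  have hSg : S = fun i => g ∘ X i := by
    funext i ω
    exact hS i ω
  have hm : ∀ i, Measurable (S i) := by
    intro i; rw [hSg]; exact hg.comp (hmeas i)
  have hind : iIndepFun S P := by
    rw [hSg]; exact hindep.comp (fun _ => g) (fun _ => hg)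
  have hid : ∀ i j, P.map (S i) = P.map (S j) := by
    intro i j
    rw [hSg]; exact ((hident i j).comp hg).map_eq
  have key := rank_prob P n p (by omega) S hm hind hid (Fin.last n)
  have hsub : {ω | (fun i => S i ω) ∈ rankSet (n + 1) p (Fin.last n)} ⊆
      {ω | ∀ h, X (Fin.last n) ω h ≤ Q ω / α h} := by
    intro ω hω h
    have hle : S (Fin.last n) ω ≤ Q ω := by
      by_contra hc
      push Not at hc
      have h1 := kth_card (fun i : Fin n => S i.castSucc ω) p hp1 hpn
      rw [← hQ] at h1
      have h2 : ((Finset.univ.filter (fun i : Fin n => S i.castSucc ω ≤ Q ω)).map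
          Fin.castSuccEmb) ⊆ Finset.univ.filter (fun i => S i ω < S (Fin.last n) ω) := by
        intro i hi
        simp only [Finset.mem_map, Finset.mem_filter, Finset.mem_univ, true_and] at hi
        obtain ⟨a, ha, rfl⟩ := hi
        simp only [Finset.mem_filter, Finset.mem_univ, true_and]
        exact lt_of_le_of_lt ha hc
      have h3 := Finset.card_le_card h2
      rw [Finset.card_map] at h3
      have h4 : (Finset.univ.filter (fun i => S i ω < S (Fin.last n) ω)).card < p := hω
      omega
    rw [le_div_iff₀ (hα h), mul_comm]
    refine le_trans ?_ hle
    rw [hS]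
    exact Finset.le_sup' (fun h => α h * X (Fin.last n) ω h) (Finset.mem_univ h)
  refine le_trans ?_ (measure_mono hsub)
  set E := {ω | (fun i => S i ω) ∈ rankSet (n + 1) p (Fin.last n)}
  have hfin : P E ≠ ⊤ := measure_ne_top _ _
  rw [ENNReal.ofReal_le_iff_le_toReal hfin]
  have hk := ENNReal.toReal_mono (ENNReal.mul_ne_top (by finiteness) hfin) key
  rw [ENNReal.toReal_mul, ENNReal.toReal_add (by finiteness) (by finiteness)] at hk
  simp only [ENNReal.toReal_natCast, ENNReal.toReal_one] at hk
  exact le_of_mul_le_mul_left (hpc.trans hk) (by positivity)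
end

section
/- Let H ≥ 1, m ≥ 1, and let R^{(1)}, …, R^{(n)}, R^{(n+1)} be independent and identically distributed random arrays with values in ℝ^{H×m} on a probability space (Ω, P), where R^{(i)}_{h,b} is the prediction error at horizon step h for uncontrolled agent b in the i-th trajectory. Let α_1, …, α_H be strictly positive real constants, let δ ∈ (0,1), and set p := ⌈(n+1)(1−δ)⌉; assume p ≤ n. For each i define the score S^{(i)} := max_{1≤h≤H} α_h · ( max_{1≤b≤m} R^{(i)}_{h,b} ), and let Q be the p-th smallest value among S^{(1)}, …, S^{(n)}. Then P( for all h ∈ {1,…,H} and all b ∈ {1,…,m}: R^{(n+1)}_{h,b} ≤ Q/α_h ) ≥ 1 − δ. -/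
open MeasureTheory ProbabilityTheory

lemma le_kthSmallest_of_card {n : ℕ} (r : Fin n → ℝ) (p : ℕ) (hp1 : 1 ≤ p) (hpn : p ≤ n) (x : ℝ)
    (h : (Finset.univ.filter (fun i => r i < x)).card < p) : x ≤ kthSmallest r p := by
  classical
  by_contra hlt
  push Not at hlt
  unfold kthSmallest at hlt
  set l := (List.ofFn r).mergeSort (· ≤ ·) with hl
  have hlen : l.length = n := by simp [hl]
  have hperm : l.Perm (List.ofFn r) := List.mergeSort_perm _ _
  have hsorted : l.Pairwise (· ≤ ·) := by
    have := List.pairwise_mergeSort (le := fun a b : ℝ => decide (a ≤ b))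
      (by intro a b c; simpa using le_trans) (by intro a b; simpa using le_total a b) (List.ofFn r)
    simpa [hl] using this
  have hi : p - 1 < l.length := by omega
  rw [List.getD_eq_getElem _ _ hi] at hlt
  have hcount : p ≤ l.countP (fun y => decide (y < x)) := by
    have h1 : (l.take p).countP (fun y => decide (y < x)) = (l.take p).length := by
      rw [List.countP_eq_length]
      intro a ha
      obtain ⟨i, hi', rfl⟩ := List.mem_iff_getElem.1 ha
      simp only [List.length_take] at hi'
      have hle : l[i]'(by omega) ≤ l[p-1] := by
        rcases Nat.lt_or_ge i (p-1) with h2 | h2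
        · exact List.pairwise_iff_getElem.1 hsorted _ _ _ _ h2
        · have : i = p - 1 := by omega
          subst this; exact le_rfl
      simpa using lt_of_le_of_lt hle hlt
    have h2 := (List.take_sublist p l).countP_le (p := fun y => decide (y < x))
    rw [h1, List.length_take] at h2
    omega
  rw [hperm.countP_eq] at hcount
  have hc : (List.ofFn r).countP (fun y => decide (y < x))
      = (Finset.univ.filter (fun i => r i < x)).card := by
    rw [List.ofFn_eq_map, List.countP_map, List.countP_eq_length_filter, Finset.card_def]
    simp only [Finset.filter_val]
    show _ = (Multiset.filter _ (↑(List.finRange n) : Multiset (Fin n))).card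
    simp [Function.comp_def]
  omega

lemma card_rank_lt {n : ℕ} (r : Fin n → ℝ) (p : ℕ) (hpn : p ≤ n) :
    p ≤ (Finset.univ.filter
      (fun j => (Finset.univ.filter (fun i => r i < r j)).card < p)).card := by
  classical
  by_cases hB : (Finset.univ.filter
      (fun j => p ≤ (Finset.univ.filter (fun i => r i < r j)).card)).Nonempty
  · obtain ⟨j, hj, hmin⟩ := Finset.exists_min_image _ r hB
    simp only [Finset.mem_filter, Finset.mem_univ, true_and] at hj hmin
    refine hj.trans (Finset.card_le_card ?_)
    intro i hi
    simp only [Finset.mem_filter, Finset.mem_univ, true_and] at hi ⊢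
    by_contra hc
    exact absurd (hmin i (not_lt.1 hc)) (not_le.2 hi)
  · rw [Finset.not_nonempty_iff_eq_empty, Finset.filter_eq_empty_iff] at hB
    rw [Finset.filter_true_of_mem (fun j hj => not_le.1 (hB hj))]
    simpa using hpn

lemma measurableSet_rank {n : ℕ} (p : ℕ) (j : Fin n) :
    MeasurableSet {r : Fin n → ℝ | (Finset.univ.filter (fun i => r i < r j)).card < p} := by
  classical
  have : Measurable (fun r : Fin n → ℝ => (Finset.univ.filter (fun i => r i < r j)).card) := by
    simp only [Finset.card_filter]
    refine Finset.measurable_sum _ fun i _ => ?_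
    exact Measurable.ite (measurableSet_lt (measurable_pi_apply i) (measurable_pi_apply j))
      measurable_const measurable_const
  exact this measurableSet_Iio

lemma prob_rank {Ω : Type*} [MeasurableSpace Ω] (P : Measure Ω) [IsProbabilityMeasure P] (n : ℕ)
    (S : Fin (n + 1) → Ω → ℝ) (hm : ∀ i, Measurable (S i)) (hi : iIndepFun S P)
    (hid : ∀ i j, IdentDistrib (S i) (S j) P P) (p : ℕ) (hpn : p ≤ n + 1) (k : Fin (n + 1)) :
    (p : ENNReal) ≤ (n + 1 : ENNReal) *
      P {ω | (Finset.univ.filter (fun i => S i ω < S k ω)).card < p} := by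
  classical
  set E : Fin (n + 1) → Set Ω :=
    fun j => {ω | (Finset.univ.filter (fun i => S i ω < S j ω)).card < p} with hE
  have hvec : Measurable (fun ω i => S i ω) := measurable_pi_lambda _ hm
  have hEm : ∀ j, MeasurableSet (E j) := fun j => hvec (measurableSet_rank p j)
  have heq : ∀ j, P (E j) = P (E k) := by
    intro j
    let σ : Equiv.Perm (Fin (n + 1)) := Equiv.swap k j
    have hi' : iIndepFun (fun i => S (σ i)) P := hi.precomp σ.injective
    have hm' : ∀ i, Measurable (S (σ i)) := fun i => hm _
    have h1 := (iIndepFun_iff_map_fun_eq_pi_map (fun i => (hm i).aemeasurable)).1 hi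
    have h2 := (iIndepFun_iff_map_fun_eq_pi_map (fun i => (hm' i).aemeasurable)).1 hi'
    have h3 : P.map (fun ω i => S i ω) = P.map (fun ω i => S (σ i) ω) := by
      rw [h1, h2]
      congr 1
      funext i
      exact (hid i (σ i)).map_eq
    have h4 := congrArg (fun μ => μ {r : Fin (n+1) → ℝ |
      (Finset.univ.filter (fun i => r i < r k)).card < p}) h3
    rw [Measure.map_apply hvec (measurableSet_rank p k),
      Measure.map_apply (measurable_pi_lambda _ hm') (measurableSet_rank p k)] at h4
    have h5 : (fun ω i => S (σ i) ω) ⁻¹' {r : Fin (n+1) → ℝ |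
      (Finset.univ.filter (fun i => r i < r k)).card < p} = E j := by
      ext ω
      simp only [Set.mem_preimage, Set.mem_ofPred_eq, hE]
      have : (Finset.univ.filter (fun i => S (σ i) ω < S (σ k) ω)).card
          = (Finset.univ.filter (fun i => S i ω < S j ω)).card := by
        refine Finset.card_equiv σ ?_
        intro i
        simp [σ]
      rw [this]
    rw [h5] at h4
    exact h4.symm
  calc (p : ENNReal) = ∫⁻ _, (p : ENNReal) ∂P := by simp
    _ ≤ ∫⁻ ω, ∑ j, (E j).indicator (fun _ => (1 : ENNReal)) ω ∂P := by
        refine lintegral_mono fun ω => ?_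
        have := card_rank_lt (fun i => S i ω) p hpn
        rw [Finset.card_filter] at this
        calc (p : ENNReal) ≤ _ := Nat.cast_le.2 this
          _ = _ := by
            push_cast
            refine Finset.sum_congr rfl fun j _ => ?_
            simp [Set.indicator_apply, hE]
    _ = ∑ j, P (E j) := by
        rw [lintegral_finsetSum _ (fun j _ => measurable_const.indicator (hEm j))]
        refine Finset.sum_congr rfl fun j _ => ?_
        rw [lintegral_indicator_const (hEm j), one_mul]
    _ = _ := by
        rw [Finset.sum_congr rfl (fun j _ => heq j)]
        simp [hE]

/-- Coverage guarantee of equation (8) of the paper, with `H+1 ≥ 1` horizon steps and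
`m+1 ≥ 1` uncontrolled agents: for i.i.d. random error arrays `R 0, …, R n` in
`ℝ^{(H+1)×(m+1)}`, strictly positive constants `α`, `δ ∈ (0,1)` and
`p := ⌈(n+1)(1-δ)⌉ ≤ n`, letting `S i := max_h α h * (max_b R i h b)` and `Q` be the
`p`-th smallest of the first `n` scores, the test array satisfies `R h b ≤ Q / α h` for all
`h` and all `b` simultaneously with probability at least `1 - δ`. -/
theorem conformal_multi_agent {Ω : Type*} [MeasurableSpace Ω] (P : Measure Ω)
    [IsProbabilityMeasure P]
    (H m n : ℕ) (R : Fin (n + 1) → Ω → (Fin (H + 1) → Fin (m + 1) → ℝ))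
    (hmeas : ∀ i, Measurable (R i))
    (hindep : iIndepFun R P)
    (hident : ∀ i j, IdentDistrib (R i) (R j) P P)
    (α : Fin (H + 1) → ℝ) (hα : ∀ h, 0 < α h)
    (δ : ℝ) (hδ : δ ∈ Set.Ioo (0 : ℝ) 1)
    (p : ℕ) (hp : p = ⌈((n : ℝ) + 1) * (1 - δ)⌉₊) (hpn : p ≤ n)
    (S : Fin (n + 1) → Ω → ℝ)
    (hS : ∀ i ω, S i ω = Finset.univ.sup' Finset.univ_nonempty
      (fun h => α h * Finset.univ.sup' Finset.univ_nonempty (fun b => R i ω h b)))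
    (Q : Ω → ℝ)
    (hQ : ∀ ω, Q ω = kthSmallest (fun i : Fin n => S i.castSucc ω) p) :
    P {ω | ∀ h b, R (Fin.last n) ω h b ≤ Q ω / α h} ≥ ENNReal.ofReal (1 - δ) := by
  classical
  let f : (Fin (H + 1) → Fin (m + 1) → ℝ) → ℝ := fun x =>
    Finset.univ.sup' Finset.univ_nonempty
      (fun h => α h * Finset.univ.sup' Finset.univ_nonempty (fun b => x h b))
  have hf : Measurable f := by
    refine Continuous.measurable ?_
    refine Continuous.finset_sup'_apply _ fun h _ => ?_
    refine continuous_const.mul ?_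
    refine Continuous.finset_sup'_apply _ fun b _ => ?_
    fun_prop
  have hSf : S = fun i => f ∘ R i := by
    funext i ω
    exact hS i ω
  have hm : ∀ i, Measurable (S i) := by
    intro i; rw [hSf]; exact hf.comp (hmeas i)
  have hi : iIndepFun S P := by
    rw [hSf]; exact hindep.comp (fun _ => f) (fun _ => hf)
  have hid : ∀ i j, IdentDistrib (S i) (S j) P P := by
    intro i j; rw [hSf]; exact (hident i j).comp hf
  have hδ1 : 0 < 1 - δ := by linarith [hδ.2]
  have hpos : 0 < ((n : ℝ) + 1) * (1 - δ) := by positivity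
  have hp1 : 1 ≤ p := by rw [hp]; exact Nat.ceil_pos.2 hpos
  have hple : ((n : ℝ) + 1) * (1 - δ) ≤ p := by rw [hp]; exact Nat.le_ceil _
  have key := prob_rank P n S hm hi hid p (by omega) (Fin.last n)
  have h1 : ENNReal.ofReal (1 - δ) ≤
      P {ω | (Finset.univ.filter (fun i => S i ω < S (Fin.last n) ω)).card < p} := by
    have h2 : (n + 1 : ENNReal) * ENNReal.ofReal (1 - δ) ≤ p := by
      have := ENNReal.ofReal_le_ofReal hple
      rw [ENNReal.ofReal_mul (by positivity), ENNReal.ofReal_natCast] at this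
      have e : ENNReal.ofReal ((n : ℝ) + 1) = (n + 1 : ENNReal) := by
        rw [ENNReal.ofReal_add (by positivity) (by norm_num)]; simp
      rwa [e] at this
    exact (ENNReal.mul_le_mul_iff_right (by simp) (by finiteness)).1 (h2.trans key)
  refine h1.trans (measure_mono ?_)
  intro ω hω h b
  simp only [Set.mem_ofPred_eq] at hω
  have hle : S (Fin.last n) ω ≤ Q ω := by
    rw [hQ]
    refine le_kthSmallest_of_card _ p hp1 hpn _ (lt_of_le_of_lt ?_ hω)
    refine Finset.card_le_card_of_injOn Fin.castSucc ?_ (Fin.castSucc_injective n).injOn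
    intro i hi
    simpa using hi
  rw [le_div_iff₀ (hα h), mul_comm]
  refine le_trans ?_ hle
  rw [hS]
  refine le_trans ?_ (Finset.le_sup' (fun h => α h * Finset.univ.sup' Finset.univ_nonempty
    (fun b => R (Fin.last n) ω h b)) (Finset.mem_univ h))
  exact mul_le_mul_of_nonneg_left
    (Finset.le_sup' (fun b => R (Fin.last n) ω h b) (Finset.mem_univ b)) (hα h).le
end
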